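/- Let n be an even square-free positive integer. Then every orbit of the Hecke group H(λ₄) acting on Q*(√-n) contains either a purely imaginary element or a totally negative quadruplet, but not both; moreover, the purely imaginary elements of an orbit, if any exist, form the pair {α, -1/(2α)} for some purely imaginary α (so the orbit contains a unique such pair), and a totally negative quadruplet contained in an orbit, if it exists, is unique. -/

import Mathlib

open Complex

/-- The set `Q*(√-n)` of complex numbers `(a + √n·i)/c` with `a, c ∈ ℤ`,
`c` even and nonzero, and `c ∣ a² + n`. -/
def Qstar (n : ℕ) : Set ℂ :=
  {z | ∃ a c : ℤ, c ≠ 0 ∧ 2 ∣ c ∧ c ∣ (a ^ 2 + (n : ℤ)) ∧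
    z = ((a : ℂ) + Real.sqrt n * Complex.I) / (c : ℂ)}

/-- The Hecke transformation `x(z) = -1/(2z)`. -/
noncomputable def heckeX (z : ℂ) : ℂ := -1 / (2 * z)

/-- The Hecke transformation `y(z) = -1/(2(z+1))`. -/
noncomputable def heckeY (z : ℂ) : ℂ := -1 / (2 * (z + 1))

/-- One step of the Hecke group action. -/
noncomputable def heckeStep (z w : ℂ) : Prop := w = heckeX z ∨ w = heckeY z

/-- Two elements lie in the same orbit if they are related by the equivalence
relation on `Q*(√-n)` generated by `z ~ x(z)` and `z ~ y(z)`. -/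
def sameOrbit (n : ℕ) (z w : ℂ) : Prop :=
  Relation.EqvGen (fun u v => u ∈ Qstar n ∧ v ∈ Qstar n ∧ heckeStep u v) z w

/-- The quadruplet `Q_α = {α, y(α), y²(α), y³(α)}`. -/
noncomputable def quad (α : ℂ) : Set ℂ :=
  {α, heckeY α, heckeY (heckeY α), heckeY (heckeY (heckeY α))}

/-- The orbit relation on the subtype `Q*(√-n)`. -/
def orbitRel (n : ℕ) (u v : {z : ℂ // z ∈ Qstar n}) : Prop :=
  sameOrbit n u.1 v.1

/-- `E_i(n)`: the number of positive even integers `C` dividing `i² + n`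
with `2(i²+n)/C + C ≤ 3i`. -/
def Efun (i n : ℕ) : ℕ :=
  ((i ^ 2 + n).divisors.filter (fun C => 2 ∣ C ∧ 2 * (i ^ 2 + n) / C + C ≤ 3 * i)).card

/-- Integer coordinates of an element of `Q*(√-n)`: `z = (a + √n·i)/(2d)`, `a² + n = 2bd`. -/
def HRep (n : ℕ) (z : ℂ) (a b d : ℤ) : Prop :=
  ((0 < b ∧ 0 < d ∧ 0 < n) ∨ (b < 0 ∧ d < 0 ∧ 0 < n)) ∧ a ^ 2 + (n : ℤ) = 2 * b * d ∧
    z = ((a : ℂ) + Real.sqrt n * Complex.I) / (2 * (d : ℂ))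

theorem rep_of_mem {n : ℕ} (hn : 0 < n) {z : ℂ} (hz : z ∈ Qstar n) : ∃ a b d, HRep n z a b d := by
  obtain ⟨a, c, hc, ⟨d, rfl⟩, ⟨b, hb⟩, rfl⟩ := hz
  refine ⟨a, b, d, ?_, by rw [hb]; ring, by push_cast; rfl⟩
  have h : 0 < b * d := by
    have : (0 : ℤ) < n := by exact_mod_cast hn
    nlinarith [sq_nonneg a]
  rcases pos_and_pos_or_neg_and_neg_of_mul_pos h with h | h <;> omega

theorem HRep.mem {n : ℕ} {z : ℂ} {a b d : ℤ} (h : HRep n z a b d) : z ∈ Qstar n := by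
  obtain ⟨h1, h2, rfl⟩ := h
  exact ⟨a, 2 * d, by omega, ⟨d, rfl⟩, ⟨b, by rw [h2]; ring⟩, by push_cast; rfl⟩

theorem HRep.re {n : ℕ} {z : ℂ} {a b d : ℤ} (h : HRep n z a b d) : z.re = (a : ℝ) / (2 * (d : ℝ)) := by
  obtain ⟨h1, h2, rfl⟩ := h
  have : ((a : ℂ) + Real.sqrt n * Complex.I) / (2 * (d : ℂ))
    = ((a : ℂ) + Real.sqrt n * Complex.I) / ((2 * (d : ℝ) : ℝ) : ℂ) := by push_cast; rfl
  rw [this, Complex.div_ofReal_re]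
  simp

theorem HRep.neg_iff {n : ℕ} {z : ℂ} {a b d : ℤ} (h : HRep n z a b d) :
    z.re < 0 ↔ (a < 0 ∧ 0 < d) ∨ (0 < a ∧ d < 0) := by
  rw [h.re, div_neg_iff]
  constructor
  · rintro (⟨h1, h2⟩ | ⟨h1, h2⟩)
    · right; exact ⟨by exact_mod_cast h1, by exact_mod_cast (by linarith : (d : ℝ) < 0)⟩
    · left; exact ⟨by exact_mod_cast h1, by exact_mod_cast (by linarith : (0 : ℝ) < d)⟩
  · rintro (⟨h1, h2⟩ | ⟨h1, h2⟩)
    · right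
      have h2 : (0 : ℝ) < d := by exact_mod_cast h2
      exact ⟨by exact_mod_cast h1, by linarith⟩
    · left
      have h2 : (d : ℝ) < 0 := by exact_mod_cast h2
      exact ⟨by exact_mod_cast h1, by linarith⟩

theorem HRep.zero_iff {n : ℕ} {z : ℂ} {a b d : ℤ} (h : HRep n z a b d) :
    z.re = 0 ↔ a = 0 := by
  have hd : (d : ℝ) ≠ 0 := by
    have : d ≠ 0 := by have := h.1; omega
    exact_mod_cast this
  rw [h.re]
  simp [hd]

theorem sqrt_sq_C (n : ℕ) : ((Real.sqrt n : ℝ) : ℂ) ^ 2 = n := by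
  rw [← Complex.ofReal_pow, Real.sq_sqrt (by positivity)]; simp

theorem key_inv {n : ℕ} {a b d : ℤ} (hb : b ≠ 0) (hd : d ≠ 0) (h2 : a ^ 2 + (n : ℤ) = 2 * b * d) :
    -1 / (2 * (((a : ℂ) + Real.sqrt n * Complex.I) / (2 * (d : ℂ)))) =
      (((-a : ℤ) : ℂ) + Real.sqrt n * Complex.I) / (2 * (b : ℂ)) := by
  have hb' : (b : ℂ) ≠ 0 := by exact_mod_cast hb
  have hd' : (d : ℂ) ≠ 0 := by exact_mod_cast hd
  have h2' : (a : ℂ) ^ 2 + n = 2 * b * d := by exact_mod_cast h2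
  have hs := sqrt_sq_C n
  have hmul : ((a : ℂ) + Real.sqrt n * Complex.I) * ((a : ℂ) - Real.sqrt n * Complex.I)
      = 2 * b * d := by
    rw [← h2', ← hs]
    linear_combination (-((Real.sqrt n : ℝ) : ℂ) ^ 2) * Complex.I_sq
  have hne : (a : ℂ) + Real.sqrt n * Complex.I ≠ 0 := by
    intro h0
    rw [h0, zero_mul] at hmul
    have : (2 : ℂ) * b * d ≠ 0 := by simp [hb', hd']
    exact this hmul.symm
  push_cast
  rw [div_eq_div_iff (by simp [hne, hd']) (by simp [hb'])]
  field_simp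
  linear_combination hmul

theorem HRep.x {n : ℕ} {z : ℂ} {a b d : ℤ} (h : HRep n z a b d) : HRep n (heckeX z) (-a) d b := by
  obtain ⟨h1, h2, rfl⟩ := h
  exact ⟨by omega, by linear_combination h2, key_inv (by omega) (by omega) h2⟩

theorem HRep.y {n : ℕ} {z : ℂ} {a b d : ℤ} (h : HRep n z a b d) :
    HRep n (heckeY z) (-(a + 2 * d)) d (2 * a + b + 2 * d) := by
  obtain ⟨h1, h2, rfl⟩ := h
  have h3 : (a + 2 * d) ^ 2 + (n : ℤ) = 2 * (2 * a + b + 2 * d) * d := by linear_combination h2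
  have hd : d ≠ 0 := by omega
  have hpos : 0 < (2 * a + b + 2 * d) * d := by
    have hn : (0 : ℤ) < n := by omega
    nlinarith [sq_nonneg (a + 2 * d)]
  have hs : (0 < 2 * a + b + 2 * d ∧ 0 < d) ∨ (2 * a + b + 2 * d < 0 ∧ d < 0) := by
    rcases pos_and_pos_or_neg_and_neg_of_mul_pos hpos with h | h
    · exact Or.inl h
    · exact Or.inr h
  refine ⟨by omega, by linear_combination h3, ?_⟩
  rw [← key_inv (by omega) hd h3, heckeY]
  have hd' : (d : ℂ) ≠ 0 := by exact_mod_cast hd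
  congr 2
  push_cast
  field_simp
  ring

theorem HRep.ext {n : ℕ} {z w : ℂ} {a b d b' : ℤ} (h : HRep n z a b d) (h' : HRep n w a b' d) :
    z = w := by rw [h.2.2, h'.2.2]

theorem HRep.coord {n : ℕ} {z : ℂ} {a b d a' b' d' : ℤ} (h : HRep n z a b d)
    (h' : HRep n z a' b' d') : d = d' ∧ b = b' := by
  have him : ∀ {a b d : ℤ}, HRep n z a b d → z.im = Real.sqrt n / (2 * (d : ℝ)) := by
    rintro a b d ⟨h1, h2, rfl⟩
    have : ((a : ℂ) + Real.sqrt n * Complex.I) / (2 * (d : ℂ))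
      = ((a : ℂ) + Real.sqrt n * Complex.I) / ((2 * (d : ℝ) : ℝ) : ℂ) := by push_cast; rfl
    rw [this, Complex.div_ofReal_im]
    simp
  have hn : 0 < n := by have := h.1; omega
  have hd : d ≠ 0 := by have := h.1; omega
  have hd' : d' ≠ 0 := by have := h'.1; omega
  have hdR : (d : ℝ) ≠ 0 := by exact_mod_cast hd
  have hdR' : (d' : ℝ) ≠ 0 := by exact_mod_cast hd'
  have hsq : Real.sqrt n ≠ 0 := (Real.sqrt_pos.mpr (by exact_mod_cast hn)).ne'
  have e1 : d = d' := by
    have := (him h).symm.trans (him h')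
    field_simp at this
    exact_mod_cast this.symm
  subst e1
  have e2 : a = a' := by
    have := h.re.symm.trans h'.re
    field_simp at this
    exact_mod_cast this
  subst e2
  refine ⟨rfl, ?_⟩
  have e3 := h.2.1.symm.trans h'.2.1
  have e4 : b * (2 * d) = b' * (2 * d) := by linear_combination e3
  exact mul_right_cancel₀ (by omega) e4

theorem x_x {n : ℕ} (hn : 0 < n) {z : ℂ} (hz : z ∈ Qstar n) : heckeX (heckeX z) = z := by
  obtain ⟨a, b, d, h⟩ := rep_of_mem hn hz
  have := h.x.x
  rw [neg_neg] at this
  exact this.ext h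

theorem HRep.y2 {n : ℕ} {z : ℂ} {a b d : ℤ} (h : HRep n z a b d) :
    HRep n (heckeY (heckeY z)) (-(3 * a + 2 * b + 2 * d)) (2 * a + b + 2 * d) (2 * a + 2 * b + d) := by
  convert h.y.y using 1 <;> ring

theorem HRep.y3 {n : ℕ} {z : ℂ} {a b d : ℤ} (h : HRep n z a b d) :
    HRep n (heckeY (heckeY (heckeY z))) (-(a + 2 * b)) (2 * a + 2 * b + d) b := by
  convert h.y2.y using 1 <;> ring

theorem HRep.y4 {n : ℕ} {z : ℂ} {a b d : ℤ} (h : HRep n z a b d) :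
    HRep n (heckeY (heckeY (heckeY (heckeY z)))) a b d := by
  convert h.y3.y using 1 <;> ring

theorem y_4 {n : ℕ} (hn : 0 < n) {z : ℂ} (hz : z ∈ Qstar n) :
    heckeY (heckeY (heckeY (heckeY z))) = z := by
  obtain ⟨a, b, d, h⟩ := rep_of_mem hn hz
  exact h.y4.ext h

theorem x_mem {n : ℕ} (hn : 0 < n) {z : ℂ} (hz : z ∈ Qstar n) : heckeX z ∈ Qstar n := by
  obtain ⟨a, b, d, h⟩ := rep_of_mem hn hz
  exact h.x.mem

theorem y_mem {n : ℕ} (hn : 0 < n) {z : ℂ} (hz : z ∈ Qstar n) : heckeY z ∈ Qstar n := by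
  obtain ⟨a, b, d, h⟩ := rep_of_mem hn hz
  exact h.y.mem

theorem quad_y {n : ℕ} (hn : 0 < n) {z : ℂ} (hz : z ∈ Qstar n) : quad (heckeY z) = quad z := by
  unfold quad
  rw [y_4 hn hz]
  ext w
  simp only [Set.mem_insert_iff, Set.mem_singleton_iff]
  tauto

theorem self_mem_quad (z : ℂ) : z ∈ quad z := by simp [quad]

theorem quad_spec {n : ℕ} (hn : 0 < n) {z w : ℂ} (hz : z ∈ Qstar n) (hw : w ∈ quad z) :
    w ∈ Qstar n ∧ quad w = quad z ∧ sameOrbit n z w := by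
  have st : ∀ u ∈ Qstar n, sameOrbit n u (heckeY u) := fun u hu =>
    Relation.EqvGen.rel _ _ ⟨hu, y_mem hn hu, Or.inr rfl⟩
  have h1 := y_mem hn hz
  have h2 := y_mem hn h1
  have h3 := y_mem hn h2
  rcases hw with rfl | rfl | rfl | rfl
  · exact ⟨hz, rfl, Relation.EqvGen.refl _⟩
  · exact ⟨h1, quad_y hn hz, st _ hz⟩
  · exact ⟨h2, by rw [quad_y hn h1, quad_y hn hz], (st _ hz).trans _ _ _ (st _ h1)⟩
  · exact ⟨h3, by rw [quad_y hn h2, quad_y hn h1, quad_y hn hz],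
      ((st _ hz).trans _ _ _ (st _ h1)).trans _ _ _ (st _ h2)⟩

/-- All other members of the quadruplet of a member with nonnegative real part are negative,
and their size is larger. -/
theorem quad_other {n : ℕ} {w z : ℂ} {a b d : ℤ} (h : HRep n w a b d) (hw : 0 ≤ w.re)
    (hz : z ∈ quad w) :
    z = w ∨ (z.re < 0 ∧ ∃ a' b' d', HRep n z a' b' d' ∧ (b + d).natAbs < (b' + d').natAbs) := by
  have h0 : ¬ (w.re < 0) := not_lt.mpr hw
  rw [h.neg_iff] at h0
  have h1 := h.1
  rcases hz with rfl | rfl | rfl | rfl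
  · exact Or.inl rfl
  · exact Or.inr ⟨by rw [h.y.neg_iff]; omega, _, _, _, h.y, by omega⟩
  · exact Or.inr ⟨by rw [h.y2.neg_iff]; omega, _, _, _, h.y2, by omega⟩
  · exact Or.inr ⟨by rw [h.y3.neg_iff]; omega, _, _, _, h.y3, by omega⟩

theorem quad_uniq {n : ℕ} (hn : 0 < n) {z w w' : ℂ} (hz : z ∈ Qstar n) (hw : w ∈ quad z)
    (hw' : w' ∈ quad z) (h0 : 0 ≤ w.re) (h0' : 0 ≤ w'.re) : w' = w := by
  obtain ⟨hwm, hq, -⟩ := quad_spec hn hz hw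
  obtain ⟨a, b, d, h⟩ := rep_of_mem hn hwm
  rw [← hq] at hw'
  rcases quad_other h h0 hw' with h1 | ⟨h1, -⟩
  · exact h1
  · linarith

/-- `HNF z S`: the reduction process starting at `z` terminates in the set `S`, which is
either a pair of imaginary elements or a totally negative quadruplet. -/
inductive HNF : ℂ → Set ℂ → Prop
  | imag (z : ℂ) (h : z.re = 0) : HNF z {z, heckeX z}
  | tn (z : ℂ) (h : ∀ w ∈ quad z, w.re < 0) : HNF z (quad z)
  | pos (z : ℂ) (S : Set ℂ) (h : 0 < z.re) (hS : HNF (heckeX z) S) : HNF z S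
  | neg (z w : ℂ) (S : Set ℂ) (h : z.re < 0) (hw : w ∈ quad z) (hw0 : 0 ≤ w.re)
      (hS : HNF w S) : HNF z S

theorem HNF.inv {n : ℕ} (hn : 0 < n) {z : ℂ} {S : Set ℂ} (hz : z ∈ Qstar n) (h : HNF z S) :
    (z.re = 0 → S = {z, heckeX z}) ∧ ((∀ w ∈ quad z, w.re < 0) → S = quad z) ∧
    (0 < z.re → HNF (heckeX z) S) ∧ (∀ w ∈ quad z, 0 ≤ w.re → HNF w S) := by
  have hs := self_mem_quad z
  cases h with
  | imag _ h =>
    refine ⟨fun _ => rfl, fun h1 => absurd (h1 _ hs) (by linarith), fun h1 => by linarith,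
      fun w hw h0 => ?_⟩
    rw [quad_uniq hn hz hs hw (by linarith) h0]
    exact HNF.imag _ h
  | tn _ h =>
    have := h _ hs
    exact ⟨fun _ => by linarith, fun _ => rfl, fun _ => by linarith,
      fun w hw h0 => by linarith [h _ hw]⟩
  | pos _ _ h hS =>
    refine ⟨fun _ => by linarith, fun h1 => absurd (h1 _ hs) (by linarith), fun _ => hS,
      fun w hw h0 => ?_⟩
    rw [quad_uniq hn hz hs hw (by linarith) h0]
    exact HNF.pos _ _ h hS
  | neg _ w _ h hw hw0 hS =>
    refine ⟨fun _ => by linarith, fun h1 => by linarith [h1 _ hw], fun _ => by linarith,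
      fun w' hw' h0 => ?_⟩
    rw [quad_uniq hn hz hw hw' hw0 h0]
    exact hS

theorem re_x_neg {n : ℕ} (hn : 0 < n) {z : ℂ} (hz : z ∈ Qstar n) :
    (0 < z.re ↔ (heckeX z).re < 0) ∧ ((heckeX z).re = 0 ↔ z.re = 0) := by
  obtain ⟨a, b, d, h⟩ := rep_of_mem hn hz
  have h1 := h.1
  refine ⟨?_, ?_⟩
  · rw [h.x.neg_iff, ← not_le, le_iff_lt_or_eq, h.neg_iff, h.zero_iff]; omega
  · rw [h.x.zero_iff, h.zero_iff]; omega

theorem HNF.to_y {n : ℕ} (hn : 0 < n) {z w : ℂ} {S : Set ℂ} (hz : z ∈ Qstar n) (h : HNF z S)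
    (hw : w ∈ quad z) : HNF w S := by
  obtain ⟨hwm, hq, -⟩ := quad_spec hn hz hw
  obtain ⟨-, h2, -, h4⟩ := h.inv hn hz
  by_cases hall : ∀ w ∈ quad z, w.re < 0
  · rw [h2 hall, ← hq]
    exact HNF.tn _ (by rw [hq]; exact hall)
  · push Not at hall
    obtain ⟨v, hv, hv0⟩ := hall
    rcases le_or_gt 0 w.re with h0 | h0
    · exact h4 _ hw h0
    · exact HNF.neg _ v _ h0 (by rw [hq]; exact hv) hv0 (h4 _ hv hv0)

theorem HNF.to_x {n : ℕ} (hn : 0 < n) {z : ℂ} {S : Set ℂ} (hz : z ∈ Qstar n) (h : HNF z S) :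
    HNF (heckeX z) S := by
  obtain ⟨h1, -, h3, -⟩ := h.inv hn hz
  have hx := re_x_neg hn (x_mem hn hz)
  rw [x_x hn hz] at hx
  rcases lt_trichotomy z.re 0 with h0 | h0 | h0
  · exact HNF.pos _ _ (hx.1.mpr h0) (by rw [x_x hn hz]; exact h)
  · rw [h1 h0]
    have := HNF.imag (heckeX z) (hx.2.mp h0)
    rwa [x_x hn hz, Set.pair_comm] at this
  · exact h3 h0

theorem HNF.orbit {n : ℕ} (hn : 0 < n) {z w : ℂ} (h : sameOrbit n z w) (S : Set ℂ) :
    HNF z S ↔ HNF w S := by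
  induction h with
  | rel u v h =>
    obtain ⟨hu, hv, rfl | rfl⟩ := h
    · refine ⟨fun h => h.to_x hn hu, fun h => ?_⟩
      have := h.to_x hn hv
      rwa [x_x hn hu] at this
    · refine ⟨fun h => h.to_y hn hu (by simp [quad]), fun h => ?_⟩
      exact h.to_y hn hv (by rw [quad_y hn hu]; exact self_mem_quad u)
  | refl => rfl
  | symm _ _ _ ih => exact ih.symm
  | trans _ _ _ _ _ ih1 ih2 => exact ih1.trans ih2

theorem HNF.unique {n : ℕ} (hn : 0 < n) {z : ℂ} {S : Set ℂ} (h : HNF z S) (hz : z ∈ Qstar n) :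
    ∀ S', HNF z S' → S = S' := by
  induction h with
  | imag z h => intro S' h'; exact ((h'.inv hn hz).1 h).symm
  | tn z h => intro S' h'; exact ((h'.inv hn hz).2.1 h).symm
  | pos z S h _ ih => intro S' h'; exact ih (x_mem hn hz) _ (h'.to_x hn hz)
  | neg z w S h hw h0 _ ih =>
    intro S' h'; exact ih (quad_spec hn hz hw).1 _ (h'.to_y hn hz hw)

/-- Every orbit reaches a terminal element. -/
theorem exists_terminal {n : ℕ} (hn : 0 < n) (k : ℕ) : ∀ (z : ℂ) (a b d : ℤ), HRep n z a b d →
    (b + d).natAbs = k → ((∃ α ∈ Qstar n, sameOrbit n z α ∧ α.re = 0) ∨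
      (∃ α ∈ Qstar n, sameOrbit n z α ∧ ∀ z ∈ quad α, z.re < 0)) := by
  induction k using Nat.strong_induction_on with
  | _ k ih =>
  have hneg : ∀ (z : ℂ) (a b d : ℤ), HRep n z a b d → z.re < 0 →
    (b + d).natAbs = k → ((∃ α ∈ Qstar n, sameOrbit n z α ∧ α.re = 0) ∨
      (∃ α ∈ Qstar n, sameOrbit n z α ∧ ∀ z ∈ quad α, z.re < 0)) := by
    intro z a b d h h0 hk
    by_cases hall : ∀ w ∈ quad z, w.re < 0
    · exact Or.inr ⟨z, h.mem, Relation.EqvGen.refl _, hall⟩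
    push Not at hall
    obtain ⟨w, hw, hw0⟩ := hall
    obtain ⟨hwm, hq, ho⟩ := quad_spec hn h.mem hw
    obtain ⟨a', b', d', h'⟩ := rep_of_mem hn hwm
    rcases quad_other h' hw0 (by rw [hq]; exact self_mem_quad z) with rfl | ⟨-, a1, b1, d1, hr, hlt⟩
    · linarith
    have hd : d = d1 ∧ b = b1 := h.coord hr
    rcases ih _ (by rw [← hk, hd.1, hd.2]; exact hlt) w a' b' d' h' rfl with
      ⟨α, hα, ho', hh⟩ | ⟨α, hα, ho', hh⟩
    · exact Or.inl ⟨α, hα, ho.trans _ _ _ ho', hh⟩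
    · exact Or.inr ⟨α, hα, ho.trans _ _ _ ho', hh⟩
  intro z a b d h hk
  rcases lt_trichotomy z.re 0 with h0 | h0 | h0
  · exact hneg z a b d h h0 hk
  · exact Or.inl ⟨z, h.mem, Relation.EqvGen.refl _, h0⟩
  · have ho : sameOrbit n z (heckeX z) := Relation.EqvGen.rel _ _ ⟨h.mem, h.x.mem, Or.inl rfl⟩
    rcases hneg _ _ _ _ h.x ((re_x_neg hn h.mem).1.mp h0) (by rw [← hk, add_comm]) with
      ⟨α, hα, ho', hh⟩ | ⟨α, hα, ho', hh⟩
    · exact Or.inl ⟨α, hα, ho.trans _ _ _ ho', hh⟩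
    · exact Or.inr ⟨α, hα, ho.trans _ _ _ ho', hh⟩

theorem stmt14 (n : ℕ) (hn : 0 < n) (heven : Even n) (hsf : Squarefree n)
    (γ : ℂ) (hγ : γ ∈ Qstar n) :
    ((∃ α ∈ Qstar n, sameOrbit n γ α ∧ α.re = 0) ∨
      (∃ α ∈ Qstar n, sameOrbit n γ α ∧ ∀ z ∈ quad α, z.re < 0)) ∧
    ¬((∃ α ∈ Qstar n, sameOrbit n γ α ∧ α.re = 0) ∧
      (∃ α ∈ Qstar n, sameOrbit n γ α ∧ ∀ z ∈ quad α, z.re < 0)) ∧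
    ((∃ α ∈ Qstar n, sameOrbit n γ α ∧ α.re = 0) →
      ∃ α ∈ Qstar n, sameOrbit n γ α ∧ α.re = 0 ∧
        {z | z ∈ Qstar n ∧ sameOrbit n γ z ∧ z.re = 0} = {α, heckeX α}) ∧
    (∀ α ∈ Qstar n, ∀ α' ∈ Qstar n, sameOrbit n γ α → sameOrbit n γ α' →
      (∀ z ∈ quad α, z.re < 0) → (∀ z ∈ quad α', z.re < 0) →
      quad α = quad α') := by 
  have key : ∀ α ∈ Qstar n, ∀ β ∈ Qstar n, sameOrbit n γ α → sameOrbit n γ β →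
      ∀ S T, HNF α S → HNF β T → S = T := by
    intro α hα β hβ h1 h2 S T hS hT
    exact HNF.unique hn ((HNF.orbit hn h1 S).mpr hS) hγ T ((HNF.orbit hn h2 T).mpr hT)
  refine ⟨?_, ?_, ?_, ?_⟩
  · obtain ⟨a, b, d, h⟩ := rep_of_mem hn hγ
    exact exists_terminal hn _ γ a b d h rfl
  · rintro ⟨⟨α, hα, ho, h⟩, β, hβ, ho', h'⟩
    have := key α hα β hβ ho ho' _ _ (HNF.imag α h) (HNF.tn β h')
    have hm : α ∈ quad β := by rw [← this]; simp
    linarith [h' _ hm]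
  · rintro ⟨α, hα, ho, h⟩
    refine ⟨α, hα, ho, h, ?_⟩
    ext z
    constructor
    · rintro ⟨hz, hzo, hz0⟩
      rw [key α hα z hz ho hzo _ _ (HNF.imag α h) (HNF.imag z hz0)]
      simp
    · rintro (rfl | rfl)
      · exact ⟨hα, ho, h⟩
      · exact ⟨x_mem hn hα, ho.trans _ _ _
          (Relation.EqvGen.rel _ _ ⟨hα, x_mem hn hα, Or.inl rfl⟩), (re_x_neg hn hα).2.mpr h⟩
  · intro α hα β hβ h1 h2 ha hb
    exact key α hα β hβ h1 h2 _ _ (HNF.tn α ha) (HNF.tn β hb)
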